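/- Let α > 1 with α ∉ ℚ ∪ ℚ₂ and let h₀ ≥ 1 be an integer. Define D₀ = [−⌈h₀^α⌉, ⌈h₀^α⌉] × [0, h₀], U_{h₀} = {x ∈ ℍ : |x₁| ≥ ⌈h₀^α⌉, x₂ ≤ |x₁|^{1/α}}, Ŵ = D₀ ∪ U_{h₀}, and ξ₀ = (0, h₀) ∈ Ŵ. Then there exists a constant c > 0, independent of N, such that for all sufficiently large N, H_{Ŵ, N}(ξ₀) ≥ c. -/

import Mathlib

open Filter

namespace SHM

/-- The upper half planar lattice `ℍ = {(x₁,x₂) ∈ ℤ² : x₂ ≥ 0}` (including the x-axis). -/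
def upperH : Set (ℤ × ℤ) := {p | 0 ≤ p.2}

/-- The horizontal line `L_n = {(x,n) : x ∈ ℤ}` of height `n`. -/
def lineH (n : ℤ) : Set (ℤ × ℤ) := {p | p.2 = n}

/-- The four unit steps of the planar simple random walk. -/
def dirs : Finset (ℤ × ℤ) := {(1,0), (-1,0), (0,1), (0,-1)}

/-- The position after `m` steps of the walk started at `z` whose first `n`
increments are given by `σ`. -/
def pos (z : ℤ × ℤ) {n : ℕ} (σ : Fin n → ℤ × ℤ) (m : ℕ) : ℤ × ℤ :=
  z + ∑ i ∈ Finset.univ.filter (fun i : Fin n => (i : ℕ) < m), σ i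

/-- The probability that the first `n` increments of the simple random walk
(each uniform on the four unit vectors) satisfy the predicate `E`. -/
noncomputable def stepProb (n : ℕ) (E : (Fin n → ℤ × ℤ) → Prop) : ℝ :=
  (Nat.card {σ : Fin n → ↥dirs // E fun i => ((σ i : ℤ × ℤ))} : ℝ) / 4 ^ n

/-- `P_z(S_{τ̄_A} = x)` : the walk started at `z` hits `A` (in finite time) for the
first time precisely at the point `x`.  Here `τ̄_A = min {m ≥ 0 : S_m ∈ A}`. -/
noncomputable def hitProb (z : ℤ × ℤ) (A : Set (ℤ × ℤ)) (x : ℤ × ℤ) : ℝ :=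
  ∑' n : ℕ, stepProb n fun σ =>
    pos z σ n = x ∧ x ∈ A ∧ ∀ m < n, pos z σ m ∉ A

/-- `P_z(τ̄_A < τ̄_B)` : the walk started at `z` hits `A` strictly before hitting `B`. -/
noncomputable def hitBeforeProb (z : ℤ × ℤ) (A B : Set (ℤ × ℤ)) : ℝ :=
  ∑' n : ℕ, stepProb n fun σ =>
    pos z σ n ∈ A ∧ pos z σ n ∉ B ∧ ∀ m < n, pos z σ m ∉ A ∧ pos z σ m ∉ B

/-- The stationary harmonic measure `H_{B,N}(x) = Σ_{z ∈ L_N \ B} P_z(S_{τ̄_{B ∪ L₀}} = x)`. -/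
noncomputable def harm (B : Set (ℤ × ℤ)) (N : ℕ) (x : ℤ × ℤ) : ℝ :=
  ∑' z : ↥(lineH (N : ℤ) \ B), hitProb (z : ℤ × ℤ) (B ∪ lineH 0) x

/-- `ℚ₁ = {log n₁ / log n₂ : n₁, n₂ ∈ ℤ, n₁, n₂ ≥ 2}`. -/
def Q1 : Set ℝ := {r | ∃ n₁ n₂ : ℤ, 2 ≤ n₁ ∧ 2 ≤ n₂ ∧ r = Real.log n₁ / Real.log n₂}

/-- `ℚ₂ = {(b − dx)/(cx − a) ∈ ℝ : x ∈ ℚ₁, a, b, c, d ∈ ℤ}`. -/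
def Q2 : Set ℝ :=
  {r | ∃ x ∈ Q1, ∃ a b c d : ℤ, (c : ℝ) * x - a ≠ 0 ∧ r = ((b : ℝ) - d * x) / ((c : ℝ) * x - a)}

/-- The box `D₀ = [−⌈h₀^α⌉, ⌈h₀^α⌉] × [0, h₀]`. -/
def boxD₀ (α : ℝ) (h₀ : ℤ) : Set (ℤ × ℤ) :=
  {x | |x.1| ≤ ⌈(h₀ : ℝ) ^ α⌉ ∧ 0 ≤ x.2 ∧ x.2 ≤ h₀}

/-- The region `U_{h₀} = {x ∈ ℍ : |x₁| ≥ ⌈h₀^α⌉, x₂ ≤ |x₁|^{1/α}}`. -/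
def regionU (α : ℝ) (h₀ : ℤ) : Set (ℤ × ℤ) :=
  {x ∈ upperH | ⌈(h₀ : ℝ) ^ α⌉ ≤ |x.1| ∧ (x.2 : ℝ) ≤ |(x.1 : ℝ)| ^ (1 / α)}

/-!
The probabilities `P_z(τ̄ = n, S_n = ξ₀)` are tested against `u = (min(y, 2N - y) - w)⁺`, where `w`
is superharmonic in the upper half plane and dominates the profile `h₀ + |x|^{1/α}` of the target.
Since `1/α < 1`, the function `w`, a superposition over dyadic scales of truncated harmonic
quadratics, can be chosen to grow only like `y / 2` along the column above `ξ₀`. Then `u` has finite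
support, vanishes on the target set, and is subharmonic where it is positive, up to a defect `1/2`
on `L_N`; summation by parts bounds `∑_z u(z) P_z(τ̄ = n, S_n = ξ₀)` by half the harmonic measure of
`ξ₀`. For `m` large and independent of `N` one has `u ≥ 1` at height `m` above `ξ₀`, and from there
the walk hits at `ξ₀` at time `m` with probability at least `4^{-m}`.
-/

open scoped Topology

lemma pos_zero (z : ℤ × ℤ) {n : ℕ} (σ : Fin n → ℤ × ℤ) : pos z σ 0 = z := by
  simp [pos]

lemma pos_cons_succ (z e : ℤ × ℤ) {n : ℕ} (σ : Fin n → ℤ × ℤ) (m : ℕ) :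
    pos z (Fin.cons e σ : Fin (n + 1) → ℤ × ℤ) (m + 1) = pos (z + e) σ m := by
  simp [pos, Finset.sum_filter, Fin.sum_univ_succ, add_assoc]

lemma stepProb_nonneg (n : ℕ) (E : (Fin n → ℤ × ℤ) → Prop) : 0 ≤ stepProb n E := by
  unfold stepProb
  positivity

lemma stepProb_eq_zero {n : ℕ} {E : (Fin n → ℤ × ℤ) → Prop} (hE : ∀ σ, ¬E σ) :
    stepProb n E = 0 := by
  simp [stepProb, hE]

lemma card_steps_succ (n : ℕ) (E : (Fin (n + 1) → ℤ × ℤ) → Prop) :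
    Nat.card {σ : Fin (n + 1) → ↥dirs // E fun i => (σ i : ℤ × ℤ)} =
      ∑ e : ↥dirs, Nat.card
        {σ : Fin n → ↥dirs // E (Fin.cons (e : ℤ × ℤ) fun i => (σ i : ℤ × ℤ))} := by
  rw [← Nat.card_sigma]
  refine Nat.card_congr (Equiv.trans (Equiv.symm ?_) (Equiv.subtypeProdEquivSigmaSubtype _))
  refine (Fin.consEquiv fun _ => ↥dirs).subtypeEquiv fun p => ?_
  exact (congrArg E (Fin.comp_cons Subtype.val p.1 p.2)).symm.to_iff

lemma stepProb_succ (n : ℕ) (E : (Fin (n + 1) → ℤ × ℤ) → Prop) :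
    stepProb (n + 1) E = (∑ e ∈ dirs, stepProb n fun σ => E (Fin.cons e σ)) / 4 := by
  simp only [stepProb]
  rw [card_steps_succ, Nat.cast_sum, ← Finset.sum_div, div_div, pow_succ,
    ← Finset.sum_coe_sort dirs]

/-- The one-step averaging operator of the walk, `(walkAvg f) z = E_z[f(S_1)]`. -/
noncomputable def walkAvg (f : ℤ × ℤ → ℝ) (z : ℤ × ℤ) : ℝ :=
  (∑ e ∈ dirs, f (z + e)) / 4

lemma walkAvg_apply (f : ℤ × ℤ → ℝ) (x y : ℤ) :
    walkAvg f (x, y) = (f (x + 1, y) + f (x - 1, y) + f (x, y + 1) + f (x, y - 1)) / 4 := by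
  simp [walkAvg, dirs, sub_eq_add_neg, add_assoc]

lemma walkAvg_mono {f g : ℤ × ℤ → ℝ} {z : ℤ × ℤ} (h : ∀ e ∈ dirs, f (z + e) ≤ g (z + e)) :
    walkAvg f z ≤ walkAvg g z :=
  div_le_div_of_nonneg_right (Finset.sum_le_sum h) zero_le_four

lemma walkAvg_nonneg {f : ℤ × ℤ → ℝ} (hf : ∀ z, 0 ≤ f z) (z : ℤ × ℤ) : 0 ≤ walkAvg f z :=
  div_nonneg (Finset.sum_nonneg fun e _ => hf (z + e)) zero_le_four

lemma walkAvg_const (c : ℝ) (z : ℤ × ℤ) : walkAvg (fun _ => c) z = c := by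
  have : dirs.card = 4 := rfl
  simp [walkAvg, this]

lemma walkAvg_sum {ι : Type*} (s : Finset ι) (f : ι → ℤ × ℤ → ℝ) (z : ℤ × ℤ) :
    walkAvg (fun w => ∑ i ∈ s, f i w) z = ∑ i ∈ s, walkAvg (f i) z := by
  simp only [walkAvg, ← Finset.sum_div]
  rw [Finset.sum_comm]

lemma summable_mul_of_support_finite {u : ℤ × ℤ → ℝ} (hu : u.support.Finite) (f : ℤ × ℤ → ℝ) :
    Summable fun z => u z * f z :=
  summable_of_hasFiniteSupport (hu.subset (Function.support_mul_subset_left u f))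

lemma support_shift_finite {u : ℤ × ℤ → ℝ} (hu : u.support.Finite) (e : ℤ × ℤ) :
    (Function.support fun z => u (z + e)).Finite :=
  hu.preimage (add_left_injective e).injOn

lemma tsum_mul_shift (u f : ℤ × ℤ → ℝ) (e : ℤ × ℤ) :
    ∑' z, u z * f (z + e) = ∑' z, u (z + -e) * f z := by
  rw [← (Equiv.addRight e).tsum_eq fun z => u (z + -e) * f z]
  simp

lemma walkAvg_support_finite {u : ℤ × ℤ → ℝ} (hu : u.support.Finite) :
    (walkAvg u).support.Finite := by
  refine (dirs.finite_toSet.biUnion fun e _ => support_shift_finite hu e).subset fun z hz => ?_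
  by_contra hz'
  simp only [Set.mem_iUnion, not_exists, Function.notMem_support] at hz'
  exact hz (by rw [walkAvg, Finset.sum_eq_zero hz', zero_div])

lemma tsum_mul_walkAvg {u : ℤ × ℤ → ℝ} (hu : u.support.Finite) (f : ℤ × ℤ → ℝ) :
    ∑' z, u z * walkAvg f z = ∑' z, walkAvg u z * f z := by
  calc ∑' z, u z * walkAvg f z
      = (∑ e ∈ dirs, ∑' z, u z * f (z + e)) / 4 := by
        simp only [walkAvg, ← mul_div_assoc, Finset.mul_sum]
        rw [tsum_div_const, Summable.tsum_finsetSum]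
        exact fun e _ => summable_mul_of_support_finite hu fun z => f (z + e)
    _ = (∑ e ∈ dirs, ∑' z, u (z + e) * f z) / 4 := by
        simp only [tsum_mul_shift]
        exact congrArg (· / 4) (Finset.sum_nbij' Neg.neg Neg.neg (by decide) (by decide)
          (by simp) (by simp) fun _ _ => rfl)
    _ = ∑' z, walkAvg u z * f z := by
        simp only [walkAvg, div_mul_eq_mul_div, Finset.sum_mul]
        rw [tsum_div_const, Summable.tsum_finsetSum]
        exact fun e _ => summable_mul_of_support_finite (support_shift_finite hu e) f

/-- The probability that the walk started at `z` hits `A` for the first time at time `n`, at the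
point `x`. -/
noncomputable def hitProbAt (A : Set (ℤ × ℤ)) (x : ℤ × ℤ) (n : ℕ) (z : ℤ × ℤ) : ℝ :=
  stepProb n fun σ => pos z σ n = x ∧ x ∈ A ∧ ∀ m < n, pos z σ m ∉ A

section hitProbAt

variable {A : Set (ℤ × ℤ)} {x z : ℤ × ℤ}

lemma hitProb_eq_tsum (z : ℤ × ℤ) (A : Set (ℤ × ℤ)) (x : ℤ × ℤ) :
    hitProb z A x = ∑' n, hitProbAt A x n z :=
  rfl

lemma hitProbAt_nonneg (A : Set (ℤ × ℤ)) (x : ℤ × ℤ) (n : ℕ) (z : ℤ × ℤ) :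
    0 ≤ hitProbAt A x n z :=
  stepProb_nonneg _ _

lemma hitProbAt_zero_le_one (A : Set (ℤ × ℤ)) (x z : ℤ × ℤ) : hitProbAt A x 0 z ≤ 1 := by
  simp only [hitProbAt, stepProb, pow_zero, div_one]
  exact_mod_cast Finite.card_le_one_iff_subsingleton.2 inferInstance

lemma hitProbAt_zero_self (hx : x ∈ A) : hitProbAt A x 0 x = 1 := by
  simp [hitProbAt, stepProb, pos_zero, hx]

lemma hitProbAt_zero_of_notMem (hz : z ∉ A) : hitProbAt A x 0 z = 0 := by
  refine stepProb_eq_zero fun σ hσ => hz ?_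
  rw [← pos_zero z σ, hσ.1]
  exact hσ.2.1

lemma hitProbAt_succ_of_mem (hz : z ∈ A) (n : ℕ) : hitProbAt A x (n + 1) z = 0 :=
  stepProb_eq_zero fun σ hσ => hσ.2.2 0 n.succ_pos (by rwa [pos_zero])

lemma hitProbAt_succ_of_notMem (hz : z ∉ A) (n : ℕ) :
    hitProbAt A x (n + 1) z = walkAvg (hitProbAt A x n) z := by
  simp only [hitProbAt, walkAvg, stepProb_succ, pos_cons_succ]
  have first_step (e : ℤ × ℤ) (σ : Fin n → ℤ × ℤ) :
      (∀ m < n + 1, pos z (Fin.cons e σ : Fin (n + 1) → ℤ × ℤ) m ∉ A) ↔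
        ∀ m < n, pos (z + e) σ m ∉ A := by
    rw [Nat.forall_lt_succ_left]
    simp only [pos_zero, hz, not_false_eq_true, true_and, pos_cons_succ]
  simp only [first_step]

lemma sum_range_hitProbAt_le_one (A : Set (ℤ × ℤ)) (x : ℤ × ℤ) (n : ℕ) (z : ℤ × ℤ) :
    ∑ i ∈ Finset.range n, hitProbAt A x i z ≤ 1 := by
  induction n generalizing z with
  | zero => simp
  | succ n ih =>
    rw [Finset.sum_range_succ']
    by_cases hz : z ∈ A
    · simpa only [hitProbAt_succ_of_mem hz, Finset.sum_const_zero, zero_add]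
        using hitProbAt_zero_le_one A x z
    · simp only [hitProbAt_succ_of_notMem hz, hitProbAt_zero_of_notMem hz, add_zero]
      rw [← walkAvg_sum]
      exact (walkAvg_mono fun e _ => ih (z + e)).trans_eq (walkAvg_const 1 z)

lemma summable_hitProbAt (A : Set (ℤ × ℤ)) (x z : ℤ × ℤ) :
    Summable fun n => hitProbAt A x n z :=
  summable_of_sum_range_le (fun n => hitProbAt_nonneg A x n z)
    fun n => sum_range_hitProbAt_le_one A x n z

lemma hasSum_tsum_mul_hitProbAt {q : ℤ × ℤ → ℝ} (hq : q.support.Finite)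
    (A : Set (ℤ × ℤ)) (x : ℤ × ℤ) :
    HasSum (fun n => ∑' z, q z * hitProbAt A x n z) (∑' z, q z * hitProb z A x) := by
  have tsum_eq (f : ℤ × ℤ → ℝ) : ∑' z, q z * f z = ∑ z ∈ hq.toFinset, q z * f z :=
    tsum_eq_sum fun z hz => by
      rw [Function.notMem_support.1 (mt hq.mem_toFinset.2 hz), zero_mul]
  simp only [tsum_eq, hitProb_eq_tsum]
  exact hasSum_sum fun z _ => (summable_hitProbAt A x z).hasSum.mul_left (q z)

/-- Going straight down already has probability `4⁻ⁿ`. -/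
lemma quarter_pow_le_hitProbAt (hx : x ∈ A) (hray : ∀ y, x.2 < y → (x.1, y) ∉ A) (n : ℕ) :
    (1 / 4 : ℝ) ^ n ≤ hitProbAt A x n (x.1, x.2 + n) := by
  induction n with
  | zero => simp [hitProbAt_zero_self hx]
  | succ n ih =>
    rw [hitProbAt_succ_of_notMem (hray _ (by push_cast; omega)), walkAvg, pow_succ,
      ← div_eq_mul_one_div]
    refine div_le_div_of_nonneg_right (ih.trans ?_) zero_le_four
    have down_mem : ((0, -1) : ℤ × ℤ) ∈ dirs := by decide
    refine le_of_eq_of_le ?_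
      (Finset.single_le_sum (fun e _ => hitProbAt_nonneg A x n _) down_mem)
    simp [add_assoc]

end hitProbAt

lemma le_of_le_succ_add_of_hasSum {a b : ℕ → ℝ} {s : ℝ} (hab : ∀ n, a n ≤ a (n + 1) + b n)
    (ha : Tendsto a atTop (𝓝 0)) (hb₀ : ∀ n, 0 ≤ b n) (hb : HasSum b s) (n : ℕ) : a n ≤ s := by
  have mono : Monotone fun n => a n + ∑ i ∈ Finset.range n, b i :=
    monotone_nat_of_le_succ fun n => by
      rw [Finset.sum_range_succ]
      linarith [hab n]
  have lim : Tendsto (fun n => a n + ∑ i ∈ Finset.range n, b i) atTop (𝓝 s) := by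
    simpa only [zero_add] using ha.add hb.tendsto_sum_nat
  exact (le_add_of_nonneg_right (Finset.sum_nonneg fun i _ => hb₀ i)).trans
    (mono.ge_of_tendsto lim n)

/-- Over one step of the walk `∑ u(z) P_z(τ̄_A = n, S_n = x)` decreases by at most
`∑ q(z) P_z(τ̄_A = n, S_n = x)`, by summation by parts, and it tends to `0`. -/
lemma tsum_mul_hitProbAt_le_tsum_mul_hitProb {A : Set (ℤ × ℤ)} {u q : ℤ × ℤ → ℝ}
    (hu : u.support.Finite) (hq : q.support.Finite) (huA : ∀ z ∈ A, u z = 0)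
    (hq₀ : ∀ z, 0 ≤ q z) (huq : ∀ z, u z ≤ walkAvg u z + q z) (x : ℤ × ℤ) (n : ℕ) :
    ∑' z, u z * hitProbAt A x n z ≤ ∑' z, q z * hitProb z A x := by
  have step (n : ℕ) : ∑' z, u z * hitProbAt A x n z ≤
      ∑' z, u z * hitProbAt A x (n + 1) z + ∑' z, q z * hitProbAt A x n z := by
    have advance (z : ℤ × ℤ) :
        u z * hitProbAt A x (n + 1) z = u z * walkAvg (hitProbAt A x n) z := by
      by_cases hz : z ∈ A
      · simp only [huA z hz, zero_mul]
      · rw [hitProbAt_succ_of_notMem hz]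
    have hS := summable_mul_of_support_finite (walkAvg_support_finite hu) (hitProbAt A x n)
    have hS' := summable_mul_of_support_finite hq (hitProbAt A x n)
    rw [tsum_congr advance, tsum_mul_walkAvg hu, ← hS.tsum_add hS']
    refine (summable_mul_of_support_finite hu _).tsum_le_tsum (fun z => ?_) (hS.add hS')
    rw [← add_mul]
    exact mul_le_mul_of_nonneg_right (huq z) (hitProbAt_nonneg A x n z)
  exact le_of_le_succ_add_of_hasSum step
    (hasSum_tsum_mul_hitProbAt hu A x).summable.tendsto_atTop_zero
    (fun n => tsum_nonneg fun z => mul_nonneg (hq₀ z) (hitProbAt_nonneg A x n z))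
    (hasSum_tsum_mul_hitProbAt hq A x) n

/-- The superharmonic function on the upper half plane that increases from `0` at the origin to `1`
off the triangle `|x₁| < R - x₂`: the quadratic `(R - x₂)² - x₁²` is discrete harmonic, and cutting
it at `0` in both places keeps it subharmonic since `R` is an integer. -/
noncomputable def triangleBarrier (R : ℕ) (z : ℤ × ℤ) : ℝ :=
  1 - max ((max ((R : ℝ) - z.2) 0) ^ 2 - (z.1 : ℝ) ^ 2) 0 / (R : ℝ) ^ 2

section triangleBarrier

variable {R : ℕ} {z : ℤ × ℤ}

lemma triangleBarrier_le_one (R : ℕ) (z : ℤ × ℤ) : triangleBarrier R z ≤ 1 :=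
  sub_le_self _ (by positivity)

lemma triangleBarrier_nonneg (hz : 0 ≤ z.2) : 0 ≤ triangleBarrier R z := by
  have hy : (0 : ℝ) ≤ z.2 := by exact_mod_cast hz
  have cut_le : max ((R : ℝ) - z.2) 0 ≤ R := max_le (by linarith) R.cast_nonneg
  refine sub_nonneg.2 (div_le_one_of_le₀ (max_le ?_ (sq_nonneg _)) (sq_nonneg _))
  exact (sub_le_self _ (sq_nonneg _)).trans (pow_le_pow_left₀ (le_max_right _ _) cut_le 2)

lemma triangleBarrier_eq_one (hz : 0 ≤ z.2) (hR : R ≤ z.1.natAbs) : triangleBarrier R z = 1 := by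
  have hy : (0 : ℝ) ≤ z.2 := by exact_mod_cast hz
  have hx : (R : ℝ) ≤ |(z.1 : ℝ)| := by
    rw [← Int.cast_abs, ← Nat.cast_natAbs]
    exact_mod_cast hR
  have cut_le : max ((R : ℝ) - z.2) 0 ≤ |(z.1 : ℝ)| := max_le (by linarith) (abs_nonneg _)
  have sq_le : (max ((R : ℝ) - z.2) 0) ^ 2 ≤ (z.1 : ℝ) ^ 2 := by
    simpa only [sq_abs] using pow_le_pow_left₀ (le_max_right _ _) cut_le 2
  rw [triangleBarrier, max_eq_right (sub_nonpos.2 sq_le), zero_div, sub_zero]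

lemma triangleBarrier_le (hR : 0 < R) (z : ℤ × ℤ) :
    triangleBarrier R z ≤ ((z.1 : ℝ) ^ 2 + 2 * R * z.2) / (R : ℝ) ^ 2 := by
  have hR' : (0 : ℝ) < R := by exact_mod_cast hR
  have sq_cut : (R : ℝ) ^ 2 - 2 * R * z.2 ≤ (max ((R : ℝ) - z.2) 0) ^ 2 := by
    rcases le_total ((R : ℝ) - z.2) 0 with h | h
    · rw [max_eq_right h]
      nlinarith
    · rw [max_eq_left h]
      nlinarith [sq_nonneg (z.2 : ℝ)]
  rw [triangleBarrier, sub_le_iff_le_add, ← add_div, one_le_div (pow_pos hR' 2)]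
  linarith [le_max_left ((max ((R : ℝ) - z.2) 0) ^ 2 - (z.1 : ℝ) ^ 2) 0]

lemma triangleBarrier_le_of_le (hz : z.2 ≤ R) :
    triangleBarrier R z ≤ 1 - (((R : ℝ) - z.2) ^ 2 - (z.1 : ℝ) ^ 2) / (R : ℝ) ^ 2 := by
  have hy : (z.2 : ℝ) ≤ R := by exact_mod_cast hz
  rw [triangleBarrier, max_eq_left (sub_nonneg.2 hy)]
  gcongr
  exact le_max_left _ _

lemma walkAvg_triangleBarrier_le (R : ℕ) (z : ℤ × ℤ) :
    walkAvg (triangleBarrier R) z ≤ triangleBarrier R z := by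
  by_cases hz : (max ((R : ℝ) - z.2) 0) ^ 2 - (z.1 : ℝ) ^ 2 ≤ 0
  · have eq_one : triangleBarrier R z = 1 := by
      rw [triangleBarrier, max_eq_right hz, zero_div, sub_zero]
    rw [eq_one]
    exact (walkAvg_mono fun e _ => triangleBarrier_le_one R (z + e)).trans_eq (walkAvg_const 1 z)
  · obtain ⟨x, y⟩ := z
    have hyR : y < R := by
      by_contra! h
      have : (R : ℝ) ≤ y := by exact_mod_cast h
      refine hz ?_
      rw [max_eq_right (sub_nonpos.2 this)]
      nlinarith
    have eq_quadratic : triangleBarrier R (x, y) =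
        1 - (((R : ℝ) - y) ^ 2 - (x : ℝ) ^ 2) / (R : ℝ) ^ 2 := by
      have : (y : ℝ) ≤ R := by exact_mod_cast hyR.le
      rw [triangleBarrier, max_eq_left (not_le.1 hz).le, max_eq_left (sub_nonneg.2 this)]
    have right := triangleBarrier_le_of_le (z := (x + 1, y)) hyR.le
    have left := triangleBarrier_le_of_le (z := (x - 1, y)) hyR.le
    have up := triangleBarrier_le_of_le (z := (x, y + 1)) hyR
    have down := triangleBarrier_le_of_le (R := R) (z := (x, y - 1)) (by simp only; omega)
    rw [walkAvg_apply, eq_quadratic]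
    push_cast at right left up down
    linear_combination (right + left + up + down) / 4

end triangleBarrier

/-- A superposition of `triangleBarrier`s over dyadic scales `2ᵏ ≥ 2ᵐ`, weighted so as to dominate
the profile `g`. -/
noncomputable def profileBarrier (g : ℕ → ℝ) (m : ℕ) (z : ℤ × ℤ) : ℝ :=
  g (2 ^ m) + ∑' k : ℕ, g (2 ^ (k + m + 1)) * triangleBarrier (2 ^ (k + m)) z

section profileBarrier

variable {g : ℕ → ℝ} {z : ℤ × ℤ}

lemma summable_dyadic_weight (hsum : Summable fun k : ℕ => g (2 ^ k) / 2 ^ k) :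
    Summable fun k : ℕ => g (2 ^ (k + 1)) / 2 ^ k := by
  refine (((summable_nat_add_iff 1).2 hsum).mul_left 2).congr fun k => ?_
  rw [pow_succ (2 : ℝ)]
  field_simp

lemma mul_triangleBarrier_nonneg (hg₀ : ∀ n, 0 ≤ g n) (hz : 0 ≤ z.2) (k : ℕ) :
    0 ≤ g (2 ^ (k + 1)) * triangleBarrier (2 ^ k) z :=
  mul_nonneg (hg₀ _) (triangleBarrier_nonneg hz)

lemma mul_triangleBarrier_le (hg₀ : ∀ n, 0 ≤ g n) (k : ℕ) (z : ℤ × ℤ) :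
    g (2 ^ (k + 1)) * triangleBarrier (2 ^ k) z ≤
      g (2 ^ (k + 1)) / 2 ^ k * ((z.1 : ℝ) ^ 2 + 2 * z.2) := by
  have one_le : (1 : ℝ) ≤ 2 ^ k := one_le_pow₀ one_le_two
  rw [div_mul_eq_mul_div, mul_div_assoc]
  refine mul_le_mul_of_nonneg_left ((triangleBarrier_le (by positivity) z).trans ?_) (hg₀ _)
  push_cast
  rw [div_le_div_iff₀ (by positivity) (by positivity)]
  nlinarith [mul_nonneg (mul_nonneg (sq_nonneg (z.1 : ℝ)) (zero_le_one.trans one_le))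
    (sub_nonneg.2 one_le)]

lemma summable_mul_triangleBarrier (hg₀ : ∀ n, 0 ≤ g n)
    (hsum : Summable fun k : ℕ => g (2 ^ k) / 2 ^ k) (m : ℕ) (hz : 0 ≤ z.2) :
    Summable fun k : ℕ => g (2 ^ (k + m + 1)) * triangleBarrier (2 ^ (k + m)) z :=
  (summable_nat_add_iff m).2 <| Summable.of_nonneg_of_le (mul_triangleBarrier_nonneg hg₀ hz)
    (fun k => mul_triangleBarrier_le hg₀ k z) ((summable_dyadic_weight hsum).mul_right _)

lemma nonneg_snd_add_of_mem_dirs (hz : 0 < z.2) {e : ℤ × ℤ} (he : e ∈ dirs) : 0 ≤ (z + e).2 := by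
  have : ∀ e ∈ dirs, -1 ≤ e.2 := by decide
  have := this e he
  rw [Prod.snd_add]
  omega

lemma walkAvg_profileBarrier_le (hg₀ : ∀ n, 0 ≤ g n)
    (hsum : Summable fun k : ℕ => g (2 ^ k) / 2 ^ k) (m : ℕ) (hz : 0 < z.2) :
    walkAvg (profileBarrier g m) z ≤ profileBarrier g m z := by
  have hS (e) (he : e ∈ dirs) := summable_mul_triangleBarrier hg₀ hsum m
    (nonneg_snd_add_of_mem_dirs hz he)
  have card_dirs : dirs.card = 4 := rfl
  calc walkAvg (profileBarrier g m) z
      = g (2 ^ m) +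
          ∑' k : ℕ, g (2 ^ (k + m + 1)) * walkAvg (triangleBarrier (2 ^ (k + m))) z := by
        simp only [walkAvg, profileBarrier, Finset.sum_add_distrib, Finset.sum_const, card_dirs,
          ← mul_div_assoc, Finset.mul_sum]
        rw [tsum_div_const, Summable.tsum_finsetSum hS]
        simp only [nsmul_eq_mul, Nat.cast_ofNat]
        ring
    _ ≤ profileBarrier g m z := by
        refine (add_le_add_iff_left _).2 (Summable.tsum_le_tsum (fun k => ?_) ?_
          (summable_mul_triangleBarrier hg₀ hsum m hz.le))
        · exact mul_le_mul_of_nonneg_left (walkAvg_triangleBarrier_le _ z) (hg₀ _)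
        · simp only [walkAvg, ← mul_div_assoc, Finset.mul_sum]
          exact (summable_sum hS).div_const 4

lemma le_profileBarrier (hg : Monotone g) (hg₀ : ∀ n, 0 ≤ g n)
    (hsum : Summable fun k : ℕ => g (2 ^ k) / 2 ^ k) (m : ℕ) (hz : 0 ≤ z.2) :
    g z.1.natAbs ≤ profileBarrier g m z := by
  have term_nonneg (k : ℕ) : 0 ≤ g (2 ^ (k + m + 1)) * triangleBarrier (2 ^ (k + m)) z :=
    mul_triangleBarrier_nonneg hg₀ hz (k + m)
  rcases le_total z.1.natAbs (2 ^ m) with hx | hx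
  · exact (hg hx).trans (le_add_of_nonneg_right (tsum_nonneg term_nonneg))
  · have hx₀ : z.1.natAbs ≠ 0 := (Nat.two_pow_pos m).trans_le hx |>.ne'
    obtain ⟨j, hj⟩ := Nat.exists_eq_add_of_le' ((Nat.le_log_iff_pow_le one_lt_two hx₀).2 hx)
    have pow_le : 2 ^ (j + m) ≤ z.1.natAbs := hj ▸ Nat.pow_log_le_self 2 hx₀
    have lt_pow : z.1.natAbs < 2 ^ (j + m + 1) := hj ▸ Nat.lt_pow_succ_log_self one_lt_two _
    calc g z.1.natAbs
        ≤ g (2 ^ (j + m + 1)) * triangleBarrier (2 ^ (j + m)) z := by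
          rw [triangleBarrier_eq_one hz pow_le, mul_one]
          exact hg lt_pow.le
      _ ≤ ∑' k : ℕ, g (2 ^ (k + m + 1)) * triangleBarrier (2 ^ (k + m)) z :=
          (summable_mul_triangleBarrier hg₀ hsum m hz).le_tsum j fun k _ => term_nonneg k
      _ ≤ profileBarrier g m z := le_add_of_nonneg_left (hg₀ _)

lemma profileBarrier_le (hg₀ : ∀ n, 0 ≤ g n) (hsum : Summable fun k : ℕ => g (2 ^ k) / 2 ^ k)
    (m : ℕ) (hz : 0 ≤ z.2) :
    profileBarrier g m z ≤ g (2 ^ m) +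
      (∑' k : ℕ, g (2 ^ (k + m + 1)) / 2 ^ (k + m)) * ((z.1 : ℝ) ^ 2 + 2 * z.2) := by
  rw [profileBarrier, ← tsum_mul_right]
  refine (add_le_add_iff_left _).2 (Summable.tsum_le_tsum
    (fun k => mul_triangleBarrier_le hg₀ (k + m) z) (summable_mul_triangleBarrier hg₀ hsum m hz) ?_)
  exact ((summable_nat_add_iff m).2 (summable_dyadic_weight hsum)).mul_right _

/-- `Σ g(2ᵏ) / 2ᵏ < ∞` is the dyadic form of `∫ g(r) / r² dr < ∞`. -/
lemma exists_superharmonic_majorant (hg : Monotone g) (hg₀ : ∀ n, 0 ≤ g n)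
    (hsum : Summable fun k : ℕ => g (2 ^ k) / 2 ^ k) {ε : ℝ} (hε : 0 < ε) :
    ∃ (w : ℤ × ℤ → ℝ) (M : ℝ), (∀ z, 0 < z.2 → walkAvg w z ≤ w z) ∧
      (∀ z, 0 ≤ z.2 → g z.1.natAbs ≤ w z) ∧
      ∀ z, 0 ≤ z.2 → w z ≤ M + ε * ((z.1 : ℝ) ^ 2 + 2 * z.2) := by
  obtain ⟨m, hm⟩ := ((tendsto_sum_nat_add fun k : ℕ => g (2 ^ (k + 1)) / 2 ^ k).eventually
    (gt_mem_nhds hε)).exists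
  refine ⟨profileBarrier g m, g (2 ^ m), fun z => walkAvg_profileBarrier_le hg₀ hsum m,
    fun z => le_profileBarrier hg hg₀ hsum m, fun z hz => ?_⟩
  have hy : (0 : ℝ) ≤ z.2 := by exact_mod_cast hz
  exact (profileBarrier_le hg₀ hsum m hz).trans <| (add_le_add_iff_left _).2 <|
    mul_le_mul_of_nonneg_right hm.le (add_nonneg (sq_nonneg _) (mul_nonneg zero_le_two hy))

end profileBarrier

/-- The height folded at the level `N`, so that it is bounded above by `N`. -/
noncomputable def tent (N : ℕ) (z : ℤ × ℤ) : ℝ :=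
  min (z.2 : ℝ) (2 * N - z.2)

lemma tent_le (N : ℕ) (z : ℤ × ℤ) : tent N z ≤ N := by
  rcases le_total (z.2 : ℝ) N with h | h
  · exact (min_le_left _ _).trans h
  · exact (min_le_right _ _).trans (by linarith)

lemma tent_eq_walkAvg_add (N : ℕ) (z : ℤ × ℤ) :
    tent N z = walkAvg (tent N) z + (lineH N).indicator (fun _ => 1 / 2) z := by
  obtain ⟨x, y⟩ := z
  rw [walkAvg_apply]
  simp only [tent, Int.cast_add, Int.cast_sub, Int.cast_one]
  rcases lt_trichotomy y (N : ℤ) with h | h | h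
  · have h' : (y : ℝ) + 1 ≤ N := by exact_mod_cast h
    rw [Set.indicator_of_notMem (show (x, y) ∉ lineH N from h.ne), min_eq_left (by linarith),
      min_eq_left (by linarith), min_eq_left (by linarith)]
    ring
  · have h' : (y : ℝ) = N := by exact_mod_cast h
    rw [Set.indicator_of_mem (show (x, y) ∈ lineH N from h), min_eq_left (by linarith),
      min_eq_right (by linarith), min_eq_left (by linarith)]
    linarith
  · have h' : (N : ℝ) + 1 ≤ y := by exact_mod_cast h
    rw [Set.indicator_of_notMem (show (x, y) ∉ lineH N from h.ne'), min_eq_right (by linarith),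
      min_eq_right (by linarith), min_eq_right (by linarith)]
    ring

/-- The positive part of `tent N - w` on the open upper half plane: the function tested against the
hitting probabilities, with `w` a superharmonic majorant of the profile of the target set. -/
noncomputable def cutTent (w : ℤ × ℤ → ℝ) (N : ℕ) (z : ℤ × ℤ) : ℝ :=
  if 0 < z.2 then max (tent N z - w z) 0 else 0

section cutTent

variable {w : ℤ × ℤ → ℝ} {N : ℕ} {z : ℤ × ℤ}

lemma cutTent_nonneg (w : ℤ × ℤ → ℝ) (N : ℕ) (z : ℤ × ℤ) : 0 ≤ cutTent w N z := by
  unfold cutTent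
  split_ifs
  exacts [le_max_right _ _, le_rfl]

lemma cutTent_ne_zero_iff : cutTent w N z ≠ 0 ↔ 0 < z.2 ∧ w z < tent N z := by
  simp [cutTent]

lemma sub_le_cutTent (hw₀ : 0 ≤ w z) (hz : 0 ≤ z.2) : tent N z - w z ≤ cutTent w N z := by
  rcases hz.lt_or_eq with hz | hz
  · exact (le_max_left _ _).trans_eq (if_pos hz).symm
  · have tent_nonpos : tent N z ≤ 0 := (min_le_left _ _).trans (by simp [← hz])
    linarith [cutTent_nonneg w N z]

lemma cutTent_le_walkAvg_add (hw₀ : ∀ z, 0 ≤ z.2 → 0 ≤ w z)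
    (hw : ∀ z, 0 < z.2 → walkAvg w z ≤ w z) (h : cutTent w N z ≠ 0) :
    cutTent w N z ≤ walkAvg (cutTent w N) z + (lineH N).indicator (fun _ => 1 / 2) z := by
  obtain ⟨hz, hlt⟩ := cutTent_ne_zero_iff.1 h
  calc cutTent w N z
      = tent N z - w z := by rw [cutTent, if_pos hz, max_eq_left (sub_nonneg.2 hlt.le)]
    _ ≤ walkAvg (tent N) z + (lineH N).indicator (fun _ => 1 / 2) z - walkAvg w z := by
        rw [← tent_eq_walkAvg_add]
        exact sub_le_sub_left (hw z hz) _
    _ = walkAvg (fun z => tent N z - w z) z + (lineH N).indicator (fun _ => 1 / 2) z := by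
        simp only [walkAvg, Finset.sum_sub_distrib]
        ring
    _ ≤ walkAvg (cutTent w N) z + (lineH N).indicator (fun _ => 1 / 2) z := by
        refine (add_le_add_iff_right _).2 (walkAvg_mono fun e he => ?_)
        have hze := nonneg_snd_add_of_mem_dirs hz he
        exact sub_le_cutTent (hw₀ _ hze) hze

end cutTent

section profile

variable {B : Set (ℤ × ℤ)} {g : ℕ → ℝ} {w : ℤ × ℤ → ℝ} {N : ℕ}

lemma cutTent_eq_zero_of_mem (hB : ∀ z ∈ B, (z.2 : ℝ) ≤ g z.1.natAbs)
    (hgw : ∀ z, 0 ≤ z.2 → g z.1.natAbs ≤ w z) {z : ℤ × ℤ} (hz : z ∈ B ∪ lineH 0) :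
    cutTent w N z = 0 := by
  by_contra h
  obtain ⟨hy, hlt⟩ := cutTent_ne_zero_iff.1 h
  rcases hz with hz | hz
  · exact hlt.not_ge ((min_le_left _ _).trans ((hB z hz).trans (hgw z hy.le)))
  · exact hy.ne' hz

lemma cutTent_support_finite (hg₀ : ∀ n, 0 ≤ g n) (hB : ∀ z ∈ B, (z.2 : ℝ) ≤ g z.1.natAbs)
    (hgw : ∀ z, 0 ≤ z.2 → g z.1.natAbs ≤ w z) (hfin : (lineH N \ B).Finite) :
    (cutTent w N).support.Finite := by
  refine ((hfin.image Prod.fst).prod (Set.finite_Icc (0 : ℤ) (2 * N))).subset fun z hz => ?_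
  obtain ⟨hy, hlt⟩ := cutTent_ne_zero_iff.1 hz
  have hgz := hgw z hy.le
  refine ⟨⟨(z.1, N), ⟨rfl, fun hmem => ?_⟩, rfl⟩, hy.le, ?_⟩
  · have : (N : ℝ) ≤ g z.1.natAbs := by exact_mod_cast hB _ hmem
    linarith [tent_le N z]
  · have tent_le_sub : tent N z ≤ 2 * N - z.2 := min_le_right _ _
    have : (z.2 : ℝ) ≤ 2 * N := by linarith [hg₀ z.1.natAbs]
    exact_mod_cast this

lemma tsum_indicator_mul_hitProb (B : Set (ℤ × ℤ)) (N : ℕ) (x : ℤ × ℤ) (c : ℝ) :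
    ∑' z, (lineH N \ B).indicator (fun _ => c) z * hitProb z (B ∪ lineH 0) x =
      c * harm B N x := by
  rw [harm, tsum_subtype (lineH N \ B) fun z => hitProb z (B ∪ lineH 0) x, ← tsum_mul_left]
  refine tsum_congr fun z => ?_
  by_cases hz : z ∈ lineH N \ B <;> simp [hz]

lemma tsum_cutTent_mul_hitProbAt_le_harm (hg₀ : ∀ n, 0 ≤ g n)
    (hB : ∀ z ∈ B, (z.2 : ℝ) ≤ g z.1.natAbs) (hfin : (lineH N \ B).Finite)
    (hw : ∀ z, 0 < z.2 → walkAvg w z ≤ w z) (hgw : ∀ z, 0 ≤ z.2 → g z.1.natAbs ≤ w z)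
    (x : ℤ × ℤ) (n : ℕ) :
    ∑' z, cutTent w N z * hitProbAt (B ∪ lineH 0) x n z ≤ 1 / 2 * harm B N x := by
  have indicator_nonneg (z) : 0 ≤ (lineH N \ B).indicator (fun _ => (1 / 2 : ℝ)) z :=
    Set.indicator_nonneg (fun _ _ => by norm_num) z
  rw [← tsum_indicator_mul_hitProb]
  refine tsum_mul_hitProbAt_le_tsum_mul_hitProb (cutTent_support_finite hg₀ hB hgw hfin)
    (hfin.subset Set.support_indicator_subset) (fun z => cutTent_eq_zero_of_mem hB hgw)
    indicator_nonneg (fun z => ?_) x n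
  by_cases hz : cutTent w N z = 0
  · rw [hz]
    exact add_nonneg (walkAvg_nonneg (cutTent_nonneg w N) z) (indicator_nonneg z)
  · have hzB : z ∉ B := fun h => hz (cutTent_eq_zero_of_mem hB hgw (Or.inl h))
    have indicator_eq : (lineH N \ B).indicator (fun _ => (1 / 2 : ℝ)) z =
        (lineH N).indicator (fun _ => 1 / 2) z := by
      by_cases hzN : z ∈ lineH N <;> simp [hzN, hzB]
    rw [indicator_eq]
    exact cutTent_le_walkAvg_add (fun z hz => (hg₀ _).trans (hgw z hz)) hw hz

theorem exists_pos_eventually_le_harm (hg : Monotone g) (hg₀ : ∀ n, 0 ≤ g n)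
    (hsum : Summable fun k : ℕ => g (2 ^ k) / 2 ^ k) (hB : ∀ z ∈ B, (z.2 : ℝ) ≤ g z.1.natAbs)
    (hfin : ∀ᶠ N : ℕ in atTop, (lineH N \ B).Finite) {x : ℤ × ℤ} (hx₀ : 0 ≤ x.2) (hx : x ∈ B)
    (hray : ∀ y, x.2 < y → (x.1, y) ∉ B) :
    ∃ c : ℝ, 0 < c ∧ ∀ᶠ N : ℕ in atTop, c ≤ harm B N x := by
  obtain ⟨w, M, hw, hgw, hwM⟩ := exists_superharmonic_majorant hg hg₀ hsum
    (by norm_num : (0 : ℝ) < 1 / 4)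
  obtain ⟨m, hm⟩ := exists_nat_ge (2 * M + (x.1 : ℝ) ^ 2 / 2 + 2)
  refine ⟨2 * (1 / 4) ^ m, by positivity, ?_⟩
  filter_upwards [hfin, eventually_ge_atTop (x.2.toNat + m)] with N hN hNm
  set p : ℤ × ℤ := (x.1, x.2 + m) with hp
  have hp₀ : 0 ≤ p.2 := by rw [hp]; omega
  have one_le_cutTent : 1 ≤ cutTent w N p := by
    have hpN : (x.2 : ℝ) + m ≤ N := by exact_mod_cast (by omega : x.2 + m ≤ (N : ℤ))
    have hx₀' : (0 : ℝ) ≤ x.2 := by exact_mod_cast hx₀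
    have tent_p : tent N p = x.2 + m := by
      rw [tent, hp, min_eq_left] <;> push_cast <;> linarith
    have w_p := hwM p hp₀
    simp only [hp] at w_p
    push_cast at w_p
    linarith [sub_le_cutTent (N := N) ((hg₀ _).trans (hgw p hp₀)) hp₀]
  have ray_avoids : ∀ y, x.2 < y → (x.1, y) ∉ B ∪ lineH 0 := fun y hy h =>
    h.elim (hray y hy) (hx₀.trans_lt hy).ne'
  have lower : (1 / 4) ^ m ≤ 1 / 2 * harm B N x := by
    calc (1 / 4 : ℝ) ^ m
        ≤ hitProbAt (B ∪ lineH 0) x m p := quarter_pow_le_hitProbAt (Or.inl hx) ray_avoids m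
      _ ≤ cutTent w N p * hitProbAt (B ∪ lineH 0) x m p :=
          le_mul_of_one_le_left (hitProbAt_nonneg _ _ _ _) one_le_cutTent
      _ ≤ ∑' z, cutTent w N z * hitProbAt (B ∪ lineH 0) x m z :=
          (summable_mul_of_support_finite (cutTent_support_finite hg₀ hB hgw hN) _).le_tsum p
            fun z _ => mul_nonneg (cutTent_nonneg w N z) (hitProbAt_nonneg _ _ _ _)
      _ ≤ 1 / 2 * harm B N x := tsum_cutTent_mul_hitProbAt_le_harm hg₀ hB hN hw hgw x m
  linarith

end profile

lemma snd_le_add_rpow_of_mem {α : ℝ} {h₀ : ℤ} (hh₀ : 0 ≤ h₀) {z : ℤ × ℤ}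
    (hz : z ∈ boxD₀ α h₀ ∪ regionU α h₀) :
    (z.2 : ℝ) ≤ h₀ + (z.1.natAbs : ℝ) ^ (1 / α) := by
  have hh₀' : (0 : ℝ) ≤ h₀ := by exact_mod_cast hh₀
  rcases hz with ⟨-, -, hz⟩ | ⟨-, -, hz⟩
  · have : (z.2 : ℝ) ≤ h₀ := by exact_mod_cast hz
    linarith [Real.rpow_nonneg (Nat.cast_nonneg z.1.natAbs) (1 / α)]
  · rw [Nat.cast_natAbs, Int.cast_abs]
    linarith

lemma summable_add_rpow_div_two_pow (c : ℝ) {β : ℝ} (hβ : β < 1) :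
    Summable fun k : ℕ => (c + ((2 ^ k : ℕ) : ℝ) ^ β) / 2 ^ k := by
  have ratio_lt_one : (2 : ℝ) ^ β / 2 < 1 := by
    rw [div_lt_one two_pos]
    simpa only [Real.rpow_one] using Real.rpow_lt_rpow_of_exponent_lt one_lt_two hβ
  refine ((summable_geometric_two.mul_left c).add
    (summable_geometric_of_lt_one (by positivity) ratio_lt_one)).congr fun k => ?_
  rw [one_div_pow, mul_one_div, div_pow, ← Real.rpow_mul_natCast zero_le_two, mul_comm β,
    Real.rpow_natCast_mul zero_le_two, add_div, Nat.cast_pow, Nat.cast_ofNat]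

lemma lineH_diff_regionU_finite {α : ℝ} (hα : 0 < α) (h₀ : ℤ) (N : ℕ) :
    (lineH N \ regionU α h₀).Finite := by
  set Y : ℤ := max ⌈(h₀ : ℝ) ^ α⌉ ⌈(N : ℝ) ^ α⌉
  refine ((Set.finite_Icc (-Y) Y).prod (Set.finite_singleton (N : ℤ))).subset ?_
  rintro ⟨x, y⟩ ⟨rfl : y = N, hx⟩
  refine ⟨abs_le.1 (le_of_not_gt fun hYx => hx ?_), rfl⟩
  have pow_le : (N : ℝ) ^ α ≤ |(x : ℝ)| := by
    exact_mod_cast Int.ceil_le.1 ((le_max_right _ _).trans hYx.le)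
  refine ⟨Int.natCast_nonneg N, (le_max_left _ _).trans hYx.le, ?_⟩
  rw [one_div, Real.le_rpow_inv_iff_of_pos (by positivity) (abs_nonneg _) hα]
  exact_mod_cast pow_le

lemma notMem_of_lt_snd {α : ℝ} {h₀ y : ℤ} (hα : 0 < α) (hh₀ : 0 ≤ h₀) (hy : h₀ < y) :
    ((0 : ℤ), y) ∉ boxD₀ α h₀ ∪ regionU α h₀ := by
  rintro (⟨-, -, h⟩ | ⟨-, -, h⟩)
  · exact hy.not_ge h
  · rw [Int.cast_zero, abs_zero, Real.zero_rpow (by positivity)] at h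
    exact (hh₀.trans_lt hy).not_ge (by exact_mod_cast h)

theorem harm_tip_ge_general {α : ℝ} (hα : 1 < α) {h₀ : ℤ} (hh₀ : 0 ≤ h₀) :
    ∃ c : ℝ, 0 < c ∧ ∀ᶠ N : ℕ in atTop,
      c ≤ harm (boxD₀ α h₀ ∪ regionU α h₀) N ((0 : ℤ), h₀) := by
  have hα₀ : 0 < α := zero_lt_one.trans hα
  have hh₀' : (0 : ℝ) ≤ h₀ := by exact_mod_cast hh₀
  have tip_mem : ((0 : ℤ), h₀) ∈ boxD₀ α h₀ ∪ regionU α h₀ :=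
    Or.inl ⟨by simpa using Int.ceil_nonneg (Real.rpow_nonneg hh₀' α), hh₀, le_rfl⟩
  exact exists_pos_eventually_le_harm (g := fun n => h₀ + (n : ℝ) ^ (1 / α))
    (fun a b hab => by dsimp only; gcongr) (fun n => by positivity)
    (summable_add_rpow_div_two_pow h₀ ((div_lt_one hα₀).2 hα))
    (fun z => snd_le_add_rpow_of_mem hh₀)
    (.of_forall fun N => (lineH_diff_regionU_finite hα₀ h₀ N).subset
      (Set.sdiff_subset_sdiff_right Set.subset_union_right))
    hh₀ tip_mem fun y => notMem_of_lt_snd hα₀ hh₀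

/-- **The tip of the sub-polynomial region has positive stationary harmonic measure.**
Let `α > 1` with `α ∉ ℚ ∪ ℚ₂`, let `h₀ ≥ 1` be an integer, `Ŵ = D₀ ∪ U_{h₀}` and
`ξ₀ = (0, h₀)`.  Then there is a constant `c > 0`, independent of `N`, such that
`H_{Ŵ,N}(ξ₀) ≥ c` for all sufficiently large `N`. -/
theorem harm_tip_ge (α : ℝ) (hα : 1 < α) (hirr : Irrational α) (hQ2 : α ∉ Q2)
    (h₀ : ℤ) (hh₀ : 1 ≤ h₀) :
    ∃ c : ℝ, 0 < c ∧ ∀ᶠ N : ℕ in atTop,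
      c ≤ harm (boxD₀ α h₀ ∪ regionU α h₀) N ((0 : ℤ), h₀) := by
  exact harm_tip_ge_general hα (zero_le_one.trans hh₀)

end SHM
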